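/- Let A = ⊕_{i∈ℤ} A_i be a ℤ-graded ring with A_i = 0 for all i < 0, and assume the degree-zero part A_0 is an artinian ring. Then the following four quantities coincide: the left global dimension of A; the supremum of the projective dimensions of the graded simple left A-modules; the right global dimension of A; and the supremum of the projective dimensions of the graded simple right A-modules. -/

import Mathlib

/-!
Statement 0. Let `A = ⊕_{i∈ℤ} A_i` be a ℤ-graded ring with `A_i = 0` for `i < 0` and with
artinian degree-zero part `A_0`.  Then the left global dimension of `A`, the supremum of the
projective dimensions of the graded simple left `A`-modules, the right global dimension of `A`,
and the supremum of the projective dimensions of the graded simple right `A`-modules all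
coincide.
-/

universe u

open DirectSum

section ProjDim

/-- `pdLE R n M` means `M` admits a projective resolution of length at most `n`
(in the category of all `R`-modules). -/
def pdLE (R : Type u) [Ring R] : ℕ → ∀ (M : Type u) [AddCommGroup M] [Module R M], Prop
  | 0, M, _, _ => Module.Projective R M
  | n+1, M, _, _ => ∃ (P : Type u) (_ : AddCommGroup P) (_ : Module R P)
      (f : P →ₗ[R] M), Module.Projective R P ∧ Function.Surjective f ∧
      pdLE R n ↥(LinearMap.ker f)

/-- The projective dimension of a module, as an element of `ℕ∞` (`⊤` if no finite
projective resolution exists). -/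
noncomputable def projDim (R : Type u) [Ring R] (M : Type u) [AddCommGroup M]
    [Module R M] : ℕ∞ :=
  ⨅ (n : ℕ) (_ : pdLE R n M), (n : ℕ∞)

/-- The (left) global dimension of a ring: the supremum of the projective dimensions of all
left modules.  (The right global dimension of `A` is `globalDim Aᵐᵒᵖ`.) -/
noncomputable def globalDim (R : Type u) [Ring R] : ℕ∞ :=
  ⨆ (M : ModuleCat.{u} R), projDim R M

end ProjDim

section Graded

variable (A : Type u) [Ring A] (𝒜 : ℤ → AddSubgroup A)

/-- A grading `ℳ` on a left `A`-module `M` compatible with the grading `𝒜` on `A`: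
`M = ⊕_j ℳ j` and `𝒜 i • ℳ j ⊆ ℳ (i + j)`. -/
def IsGradedModule (M : Type u) [AddCommGroup M] [Module A M]
    (ℳ : ℤ → AddSubgroup M) : Prop :=
  DirectSum.IsInternal ℳ ∧
    ∀ (i j : ℤ) (a : A) (m : M), a ∈ 𝒜 i → m ∈ ℳ j → a • m ∈ ℳ (i + j)

/-- A grading on a right `A`-module (= left `Aᵐᵒᵖ`-module): `ℳ j • 𝒜 i ⊆ ℳ (j + i)`. -/
def IsGradedRightModule (M : Type u) [AddCommGroup M] [Module Aᵐᵒᵖ M]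
    (ℳ : ℤ → AddSubgroup M) : Prop :=
  DirectSum.IsInternal ℳ ∧
    ∀ (i j : ℤ) (a : A) (m : M), a ∈ 𝒜 i → m ∈ ℳ j → (MulOpposite.op a) • m ∈ ℳ (j + i)

/-- A submodule `p` is graded (w.r.t. the grading `ℳ`) if it is the (internal direct) sum of
its homogeneous parts `p ∩ ℳ j`. -/
def IsGradedSubmodule {R : Type*} [Ring R] {M : Type u} [AddCommGroup M] [Module R M]
    (ℳ : ℤ → AddSubgroup M) (p : Submodule R M) : Prop :=
  p.toAddSubgroup = ⨆ j : ℤ, (p.toAddSubgroup ⊓ ℳ j)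

/-- A graded-simple left `A`-module: a nonzero graded module whose only graded submodules
are `⊥` and `⊤`. -/
def IsGradedSimple (M : Type u) [AddCommGroup M] [Module A M]
    (ℳ : ℤ → AddSubgroup M) : Prop :=
  IsGradedModule A 𝒜 M ℳ ∧ Nontrivial M ∧
    ∀ p : Submodule A M, IsGradedSubmodule ℳ p → p = ⊥ ∨ p = ⊤

/-- A graded-simple right `A`-module. -/
def IsGradedSimpleRight (M : Type u) [AddCommGroup M] [Module Aᵐᵒᵖ M]
    (ℳ : ℤ → AddSubgroup M) : Prop :=
  IsGradedRightModule A 𝒜 M ℳ ∧ Nontrivial M ∧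
    ∀ p : Submodule Aᵐᵒᵖ M, IsGradedSubmodule ℳ p → p = ⊥ ∨ p = ⊤

end Graded

/-!
Let `S` be the quotient of `A₀` by its radical and `J` the kernel of `A → A₀ → S`. The left
`A`-module `A ⧸ J` is semisimple with graded simple constituents, so its projective dimension is at
most the supremum `s` over the graded simple left modules, and the right module `W` of characters of
`A ⧸ J` has injective dimension at most `s`. It remains to bound the projective dimension of an
arbitrary, ungraded right module by the injective dimension of `W`.

Present the module by a free module filtered by degree and pass to leading forms: the resulting
presentations are strict for the filtrations, so the leading forms of a resolution are again exact,
and dimension shifting turns the vanishing of `Ext (-, W)` into the extendability of all maps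
`gr L → W` along `gr L ⊆ F`, where the `s`-th syzygy is presented as `F ⧸ L` with `F` free. By
duality this says `gr L ∩ F J ⊆ (gr L) J`. As `S` is semisimple, `gr L` then splits off modulo `J`;
lifting the splitting to `L` gives an endomorphism that is unipotent for the filtration,
because the radical of `A₀` is nilpotent and degrees are bounded below. So `L` is a direct summand
of `F` and the `s`-th syzygy is projective.

Thus the right global dimension is at most the supremum over graded simple left modules, which is
at most the left global dimension. The same bounds for `Aᵐᵒᵖ` close the cycle of inequalities.
-/

lemma isInternal_of_iSup_eq_top_of_proj {ι M : Type*} [DecidableEq ι] [AddCommGroup M]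
    {ℳ : ι → AddSubgroup M} (hℳ : ⨆ i, ℳ i = ⊤) (π : ι → M →+ M)
    (hπ : ∀ i, ∀ x ∈ ℳ i, ∀ j, π j x = if i = j then x else 0) : IsInternal ℳ := by
  have hπ_coe (j : ι) (v : ⨁ i, ℳ i) : π j (DirectSum.coeAddMonoidHom ℳ v) = v j := by
    induction v using DirectSum.induction_on with
    | zero => simp
    | of i x =>
      rw [coeAddMonoidHom_of, hπ i x x.2, coe_of_apply, apply_ite Subtype.val,
        ZeroMemClass.coe_zero]
    | add v w hv hw => rw [map_add, map_add, hv, hw, DirectSum.add_apply, AddSubgroup.coe_add]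
  refine ⟨fun v w h => DFinsupp.ext fun j => Subtype.ext ?_, ?_⟩
  · rw [← hπ_coe, ← hπ_coe, h]
  · exact AddMonoidHom.range_eq_top.1 (top_unique (hℳ.ge.trans (iSup_le fun i x hx =>
      ⟨DirectSum.of (fun j => ℳ j) i ⟨x, hx⟩, coeAddMonoidHom_of ℳ i _⟩)))

section GradedModule

variable {A : Type*} [Ring A] (𝒜 : ℤ → AddSubgroup A)
  {M : Type*} [AddCommGroup M] [Module A M] (ℳ : ℤ → AddSubgroup M) [Decomposition ℳ]

/-- The degree `j` component of an element of a graded module. -/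
def gradedComponent (j : ℤ) : M →+ M :=
  (ℳ j).subtype.comp ((DFinsupp.evalAddMonoidHom j).comp (decomposeAddEquiv ℳ).toAddMonoidHom)

lemma gradedComponent_apply (j : ℤ) (x : M) : gradedComponent ℳ j x = decompose ℳ x j := rfl

lemma gradedComponent_mem (j : ℤ) (x : M) : gradedComponent ℳ j x ∈ ℳ j := (decompose ℳ x j).2

variable {ℳ} in
lemma gradedComponent_of_mem {i : ℤ} {x : M} (hx : x ∈ ℳ i) (j : ℤ) :
    gradedComponent ℳ j x = if i = j then x else 0 := by
  split_ifs with h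
  · subst h; exact decompose_of_mem_same ℳ hx
  · exact decompose_of_mem_ne ℳ hx h

lemma gradedComponent_gradedComponent (i j : ℤ) (x : M) :
    gradedComponent ℳ j (gradedComponent ℳ i x) = if i = j then gradedComponent ℳ i x else 0 :=
  gradedComponent_of_mem (gradedComponent_mem ℳ i x) j

lemma exists_sum_gradedComponent (x : M) :
    ∃ s : Finset ℤ, (∀ i ∉ s, gradedComponent ℳ i x = 0) ∧ ∑ i ∈ s, gradedComponent ℳ i x = x := by
  classical
  refine ⟨(decompose ℳ x).support, fun i hi => ?_, sum_support_decompose ℳ x⟩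
  simpa [gradedComponent_apply] using hi

variable {ℳ} in
lemma eq_zero_of_gradedComponent_eq_zero {x : M} (h : ∀ j, gradedComponent ℳ j x = 0) : x = 0 := by
  obtain ⟨s, -, hs⟩ := exists_sum_gradedComponent ℳ x
  rw [← hs, Finset.sum_eq_zero fun i _ => h i]

variable {𝒜 ℳ} in
lemma gradedComponent_smul_of_mem [SetLike.GradedSMul 𝒜 ℳ] {i : ℤ} {a : A} (ha : a ∈ 𝒜 i) (j : ℤ)
    (x : M) : gradedComponent ℳ j (a • x) = a • gradedComponent ℳ (j - i) x := by
  induction x using Decomposition.inductionOn ℳ with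
  | zero => simp
  | @homogeneous k m =>
    rw [gradedComponent_of_mem (SetLike.GradedSMul.smul_mem ha m.2), gradedComponent_of_mem m.2,
      smul_ite, smul_zero]
    exact if_congr (by rw [vadd_eq_add]; omega) rfl rfl
  | add x y hx hy => simp only [smul_add, map_add, hx, hy]

/-- The elements of a graded module all of whose components have degree less than `j`. -/
def degreeLT (j : ℤ) : Submodule ℤ M where
  carrier := {x | ∀ k, j ≤ k → gradedComponent ℳ k x = 0}
  zero_mem' _ _ := map_zero _
  add_mem' hx hy k hk := by rw [map_add, hx k hk, hy k hk, add_zero]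
  smul_mem' c x hx k hk := by rw [map_zsmul, hx k hk, smul_zero]

variable {ℳ}

lemma degreeLT_mono {i j : ℤ} (h : i ≤ j) : degreeLT ℳ i ≤ degreeLT ℳ j :=
  fun _ hx k hk => hx k (h.trans hk)

lemma mem_degreeLT_of_mem {i j : ℤ} (hij : i < j) {x : M} (hx : x ∈ ℳ i) : x ∈ degreeLT ℳ j :=
  fun k hk => by rw [gradedComponent_of_mem hx, if_neg (by omega)]

lemma gradedComponent_eq_of_sub_mem_degreeLT {j : ℤ} {x y : M} (hx : x ∈ ℳ j)
    (h : y - x ∈ degreeLT ℳ j) : gradedComponent ℳ j y = x := by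
  have := h j le_rfl
  rwa [map_sub, gradedComponent_of_mem hx, if_pos rfl, sub_eq_zero] at this

lemma sub_gradedComponent_mem_degreeLT {j : ℤ} {x : M} (hx : x ∈ degreeLT ℳ (j + 1)) :
    x - gradedComponent ℳ j x ∈ degreeLT ℳ j := fun k hk => by
  rw [map_sub, gradedComponent_gradedComponent]
  split_ifs with h
  · rw [h, sub_self]
  · rw [hx k (by omega), sub_zero]

lemma mem_degreeLT_add_one_of_sub_mem {j : ℤ} {x y : M} (hy : y ∈ ℳ j)
    (h : x - y ∈ degreeLT ℳ j) : x ∈ degreeLT ℳ (j + 1) := by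
  rw [← sub_add_cancel x y]
  exact add_mem (degreeLT_mono (by omega) h) (mem_degreeLT_of_mem (by omega) hy)

lemma exists_nat_mem_degreeLT (x : M) : ∃ n : ℕ, x ∈ degreeLT ℳ n := by
  obtain ⟨s, hs, -⟩ := exists_sum_gradedComponent ℳ x
  obtain ⟨b, hb⟩ := s.bddAbove
  refine ⟨(b + 1).toNat, fun k hk => hs k fun hks => ?_⟩
  have := hb hks
  omega

lemma eq_zero_of_mem_degreeLT (hℳ : ∀ j < 0, ℳ j = ⊥) {j : ℤ} (hj : j ≤ 0) {x : M}
    (hx : x ∈ degreeLT ℳ j) : x = 0 :=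
  eq_zero_of_gradedComponent_eq_zero (ℳ := ℳ) fun k => by
    rcases lt_or_ge k 0 with hk | hk
    · simpa [hℳ k hk] using gradedComponent_mem ℳ k x
    · exact hx k (hj.trans hk)

lemma degreeLT_induction {j : ℤ} {p : M → Prop} (zero : p 0)
    (homogeneous : ∀ k < j, ∀ x ∈ ℳ k, p x) (add : ∀ x y, p x → p y → p (x + y))
    {x : M} (hx : x ∈ degreeLT ℳ j) : p x := by
  obtain ⟨s, -, hs⟩ := exists_sum_gradedComponent ℳ x
  rw [← hs]
  refine Finset.sum_induction _ p add zero fun k _ => ?_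
  rcases lt_or_ge k j with hk | hk
  · exact homogeneous k hk _ (gradedComponent_mem ℳ k x)
  · rwa [hx k hk]

variable {𝒜} in
lemma smul_mem_degreeLT [SetLike.GradedSMul 𝒜 ℳ] {i j k : ℤ} (hk : i + j ≤ k) {a : A}
    (ha : a ∈ 𝒜 i) {x : M} (hx : x ∈ degreeLT ℳ j) : a • x ∈ degreeLT ℳ k := fun l hl => by
  rw [gradedComponent_smul_of_mem ha, hx _ (by omega), smul_zero]

section LeadingForms

variable (ℳ) [GradedRing 𝒜] [SetLike.GradedSMul 𝒜 ℳ]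

/-- The module of leading forms `gr L ⊆ M` of a submodule `L ⊆ M`: its degree `j` part consists
of the degree `j` components of the elements of `L` without components of higher degree. -/
def leadingForms (L : Submodule A M) : Submodule A M where
  carrier := {x | ∀ j, ∃ y ∈ L, y - gradedComponent ℳ j x ∈ degreeLT ℳ j}
  zero_mem' j := ⟨0, L.zero_mem, by simp⟩
  add_mem' {x x'} hx hx' j := by
    obtain ⟨y, hy, hyx⟩ := hx j
    obtain ⟨y', hy', hyx'⟩ := hx' j
    refine ⟨y + y', L.add_mem hy hy', ?_⟩
    rw [map_add, add_sub_add_comm]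
    exact add_mem hyx hyx'
  smul_mem' a x hx j := by
    induction a using Decomposition.inductionOn 𝒜 with
    | zero => exact ⟨0, L.zero_mem, by simp⟩
    | @homogeneous i a =>
      obtain ⟨y, hy, hyx⟩ := hx (j - i)
      refine ⟨(a : A) • y, L.smul_mem _ hy, ?_⟩
      rw [gradedComponent_smul_of_mem a.2, ← smul_sub]
      exact smul_mem_degreeLT (by omega) a.2 hyx
    | add a b ha hb =>
      obtain ⟨y, hy, hyx⟩ := ha
      obtain ⟨z, hz, hzx⟩ := hb
      refine ⟨y + z, L.add_mem hy hz, ?_⟩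
      rw [add_smul, map_add, add_sub_add_comm]
      exact add_mem hyx hzx

variable {𝒜 ℳ}

lemma mem_leadingForms_of_sub_mem {L : Submodule A M} {j : ℤ} {x y : M} (hx : x ∈ ℳ j)
    (hy : y ∈ L) (hyx : y - x ∈ degreeLT ℳ j) : x ∈ leadingForms 𝒜 ℳ L := fun k => by
  rw [gradedComponent_of_mem hx]
  split_ifs with h
  · subst h; exact ⟨y, hy, hyx⟩
  · exact ⟨0, L.zero_mem, by simp⟩

end LeadingForms

section LeadingPart

variable {F : Type*} [AddCommGroup F] [Module A F] (ℱ : ℤ → AddSubgroup F)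
  (ℳ : ℤ → AddSubgroup M) [Decomposition ℳ]

/-- `g` is the leading part of `f`: the map `f` does not raise degrees, and `g` is the
homogeneous map of degree `0` that agrees with `f` up to terms of lower degree. -/
def IsLeadingPart (f g : F →ₗ[A] M) : Prop :=
  ∀ j, ∀ x ∈ ℱ j, g x ∈ ℳ j ∧ f x - g x ∈ degreeLT ℳ j

variable [Decomposition ℱ]

/-- Every element of the image of `f` of degree less than `j` is the image of an element of
degree less than `j`. -/
def IsStrict (f : F →ₗ[A] M) : Prop :=
  ∀ j, ∀ y ∈ LinearMap.range f, y ∈ degreeLT ℳ j → ∃ x ∈ degreeLT ℱ j, f x = y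

variable {ℱ ℳ} {f g : F →ₗ[A] M}

namespace IsLeadingPart

variable (h : IsLeadingPart ℱ ℳ f g)
include h

lemma apply_mem_degreeLT {j : ℤ} {x : F} (hx : x ∈ degreeLT ℱ j) : f x ∈ degreeLT ℳ j := by
  refine degreeLT_induction (p := fun x => f x ∈ degreeLT ℳ j) (by simp) (fun k hk x hx => ?_)
    (fun x y hx hy => by rw [map_add]; exact add_mem hx hy) hx
  obtain ⟨hgx, hfgx⟩ := h k x hx
  exact degreeLT_mono (by omega) (mem_degreeLT_add_one_of_sub_mem hgx hfgx)

lemma gradedComponent_apply (j : ℤ) (x : F) :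
    gradedComponent ℳ j (g x) = g (gradedComponent ℱ j x) := by
  induction x using Decomposition.inductionOn ℱ with
  | zero => simp
  | @homogeneous k x =>
    rw [gradedComponent_of_mem x.2, gradedComponent_of_mem (h k x x.2).1, apply_ite g, map_zero]
  | add x y hx hy => simp only [map_add, hx, hy]

lemma sub_mem_degreeLT {j : ℤ} {x : F} (hx : x ∈ degreeLT ℱ (j + 1)) :
    f x - g (gradedComponent ℱ j x) ∈ degreeLT ℳ j := by
  have hlow := h.apply_mem_degreeLT (sub_gradedComponent_mem_degreeLT hx)
  have htop := (h j _ (gradedComponent_mem ℱ j x)).2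
  rw [map_sub] at hlow
  rw [← sub_add_sub_cancel]
  exact add_mem hlow htop

lemma gradedComponent_apply_of_mem {j : ℤ} {x : F} (hx : x ∈ degreeLT ℱ (j + 1)) :
    gradedComponent ℳ j (f x) = g (gradedComponent ℱ j x) :=
  gradedComponent_eq_of_sub_mem_degreeLT (h j _ (gradedComponent_mem ℱ j x)).1
    (h.sub_mem_degreeLT hx)

variable [GradedRing 𝒜]

lemma ker_eq_leadingForms [SetLike.GradedSMul 𝒜 ℱ] (hf : IsStrict ℱ ℳ f) :
    LinearMap.ker g = leadingForms 𝒜 ℱ (LinearMap.ker f) := by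
  ext x
  refine ⟨fun hx j => ?_, fun hx => eq_zero_of_gradedComponent_eq_zero (ℳ := ℳ) fun j => ?_⟩
  · have hgx : g (gradedComponent ℱ j x) = 0 := by
      rw [← h.gradedComponent_apply, LinearMap.mem_ker.1 hx, map_zero]
    have hfx := (h j _ (gradedComponent_mem ℱ j x)).2
    rw [hgx, sub_zero] at hfx
    obtain ⟨z, hz, hfz⟩ := hf j _ ⟨_, rfl⟩ hfx
    refine ⟨gradedComponent ℱ j x - z, by simp [hfz], ?_⟩
    rw [sub_sub_cancel_left]
    exact neg_mem hz
  · obtain ⟨y, hy, hyx⟩ := hx j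
    have hy' := mem_degreeLT_add_one_of_sub_mem (gradedComponent_mem ℱ j x) hyx
    rw [h.gradedComponent_apply,
      ← gradedComponent_eq_of_sub_mem_degreeLT (gradedComponent_mem ℱ j x) hyx,
      ← h.gradedComponent_apply_of_mem hy', LinearMap.mem_ker.1 hy, map_zero]

lemma range_eq_leadingForms [SetLike.GradedSMul 𝒜 ℳ] (hf : IsStrict ℱ ℳ f) :
    LinearMap.range g = leadingForms 𝒜 ℳ (LinearMap.range f) := by
  refine le_antisymm ?_ fun x hx => ?_
  · rintro _ ⟨x, rfl⟩ j
    rw [h.gradedComponent_apply]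
    exact ⟨_, ⟨_, rfl⟩, (h j _ (gradedComponent_mem ℱ j x)).2⟩
  · obtain ⟨s, -, hs⟩ := exists_sum_gradedComponent ℳ x
    rw [← hs]
    refine sum_mem fun j _ => ?_
    obtain ⟨y, hy, hyx⟩ := hx j
    have hy' := mem_degreeLT_add_one_of_sub_mem (gradedComponent_mem ℳ j x) hyx
    obtain ⟨z, hz, rfl⟩ := hf _ _ hy hy'
    exact ⟨gradedComponent ℱ j z, (h.gradedComponent_apply_of_mem hz).symm.trans
      (gradedComponent_eq_of_sub_mem_degreeLT (gradedComponent_mem ℳ j x) hyx)⟩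

end IsLeadingPart

end LeadingPart

section Unipotent

variable {𝒜}

-- Nakayama's argument for the nilpotent `K`, run on `δ P ⊆ K P + N` instead of `P ⊆ K P + N`.
lemma le_restrictScalars_of_isNilpotent {K : Submodule ℤ A} (hK : IsNilpotent K)
    {P : Submodule ℤ M} {N : Submodule A M} {δ : Module.End A M} (hN : ∀ y, δ y ∈ N → y ∈ N)
    (hδ : ∀ y ∈ P, δ y ∈ K • P ⊔ N.restrictScalars ℤ) : P ≤ N.restrictScalars ℤ := by
  have hsmul (m : ℕ) : K ^ m • N.restrictScalars ℤ ≤ N.restrictScalars ℤ :=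
    Submodule.smul_le.2 fun a _ y hy => N.smul_mem a hy
  have hdown (m : ℕ) (hm : K ^ (m + 1) • P ≤ N.restrictScalars ℤ) :
      K ^ m • P ≤ N.restrictScalars ℤ := Submodule.smul_le.2 fun a ha y hy => by
    refine hN _ ?_
    rw [map_smul]
    have := Submodule.smul_mem_smul ha (hδ y hy)
    rw [Submodule.smul_sup, ← Submodule.smul_assoc, smul_eq_mul, ← pow_succ] at this
    exact sup_le hm (hsmul m) this
  obtain ⟨m, hm⟩ := hK
  have hm' : K ^ m • P ≤ N.restrictScalars ℤ := by
    rw [hm, Submodule.zero_eq_bot, Submodule.bot_smul]; exact bot_le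
  clear hm
  induction m with
  | zero => rwa [pow_zero, Submodule.one_smul] at hm'
  | succ m ih => exact ih (hdown m hm')

lemma bijective_of_one_sub_pow_apply_eq_zero {φ : Module.End A M}
    (hφ : ∀ x, ∃ k, ((1 - φ) ^ k : Module.End A M) x = 0) : Function.Bijective φ := by
  refine ⟨(injective_iff_map_eq_zero φ).2 fun x hx => ?_, fun x => ?_⟩
  · obtain ⟨k, hk⟩ := hφ x
    have := LinearMap.congr_fun (geom_sum_mul_neg (1 - φ) k) x
    simpa [hx, hk, eq_comm] using this
  · obtain ⟨k, hk⟩ := hφ x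
    have := LinearMap.congr_fun (mul_neg_geom_sum (1 - φ) k) x
    rw [sub_sub_cancel, Module.End.mul_apply, LinearMap.sub_apply, hk, Module.End.one_apply,
      sub_zero] at this
    exact ⟨_, this⟩

variable [GradedRing 𝒜] [SetLike.GradedSMul 𝒜 ℳ] {L : Submodule A M}

lemma exists_lift_of_mem_smul_leadingForms (h𝒜 : ∀ i < 0, 𝒜 i = ⊥) {I : Ideal A}
    {K : Submodule ℤ A} (hK : ∀ a ∈ I, gradedComponent 𝒜 0 a ∈ K) {j : ℤ} {P N : Submodule ℤ L}
    (hP : ∀ x : L, (x : M) ∈ degreeLT ℳ (j + 1) → x ∈ P)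
    (hN : ∀ (a : A) (x : L), (x : M) ∈ degreeLT ℳ j → a • x ∈ N)
    {z : M} (hz : z ∈ I • leadingForms 𝒜 ℳ L) :
    ∃ x ∈ K • P ⊔ N, (x : M) - gradedComponent ℳ j z ∈ degreeLT ℳ j := by
  refine Submodule.smul_induction_on hz (fun a ha w hw => ?_) fun z z' hz hz' => ?_
  · obtain ⟨s, -, hs⟩ := exists_sum_gradedComponent 𝒜 a
    choose y hyL hyw using hw
    refine ⟨∑ i ∈ s, gradedComponent 𝒜 i a • ⟨y (j - i), hyL _⟩, sum_mem fun i _ => ?_, ?_⟩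
    · have hy := mem_degreeLT_add_one_of_sub_mem (gradedComponent_mem ℳ (j - i) w) (hyw (j - i))
      rcases lt_trichotomy i 0 with hi | rfl | hi
      · have : gradedComponent 𝒜 i a = 0 := by simpa [h𝒜 i hi] using gradedComponent_mem 𝒜 i a
        rw [this, zero_smul]
        exact zero_mem _
      · refine Submodule.mem_sup_left (Submodule.smul_mem_smul (hK a ha) (hP _ ?_))
        simpa using hy
      · exact Submodule.mem_sup_right (hN _ _ (degreeLT_mono (by omega) hy))
    · have hw : gradedComponent ℳ j (a • w) =
          ∑ i ∈ s, gradedComponent 𝒜 i a • gradedComponent ℳ (j - i) w := by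
        conv_lhs => rw [← hs, Finset.sum_smul, map_sum]
        exact Finset.sum_congr rfl fun i _ =>
          gradedComponent_smul_of_mem (gradedComponent_mem 𝒜 i a) j w
      rw [hw, AddSubmonoidClass.coe_finsetSum, ← Finset.sum_sub_distrib]
      refine sum_mem fun i _ => ?_
      rw [SetLike.val_smul, ← smul_sub]
      exact smul_mem_degreeLT (by omega) (gradedComponent_mem 𝒜 i a) (hyw _)
  · obtain ⟨x, hx, hxz⟩ := hz
    obtain ⟨x', hx', hxz'⟩ := hz'
    refine ⟨x + x', add_mem hx hx', ?_⟩
    rw [Submodule.coe_add, map_add, add_sub_add_comm]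
    exact add_mem hxz hxz'

lemma exists_pow_apply_eq_zero_of_leadingForms (h𝒜 : ∀ i < 0, 𝒜 i = ⊥) (hℳ : ∀ j < 0, ℳ j = ⊥)
    {I : Ideal A} {K : Submodule ℤ A} (hK : ∀ a ∈ I, gradedComponent 𝒜 0 a ∈ K)
    (hnil : IsNilpotent K) {δ : Module.End A L}
    (hδ : ∀ j, ∀ x : L, (x : M) ∈ degreeLT ℳ (j + 1) →
      ∃ z ∈ I • leadingForms 𝒜 ℳ L, (δ x : M) - gradedComponent ℳ j z ∈ degreeLT ℳ j) (x : L) :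
    ∃ k, (δ ^ k) x = 0 := by
  let N : Submodule A L := ⨆ k, LinearMap.iterateKer δ k
  have mem_N (y : L) : y ∈ N ↔ ∃ k, (δ ^ k) y = 0 :=
    Submodule.mem_iSup_of_directed _ (LinearMap.iterateKer δ).monotone.directed_le
  have hN (y : L) (hy : δ y ∈ N) : y ∈ N := by
    obtain ⟨k, hk⟩ := (mem_N _).1 hy
    exact (mem_N _).2 ⟨k + 1, by rwa [pow_succ, Module.End.mul_apply]⟩
  let P (j : ℤ) : Submodule ℤ L := (degreeLT ℳ j).comap (L.subtype.restrictScalars ℤ)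
  have hP (n : ℕ) : P n ≤ N.restrictScalars ℤ := by
    induction n with
    | zero =>
      intro y hy
      have : y = 0 := Subtype.ext (eq_zero_of_mem_degreeLT hℳ le_rfl hy)
      rw [this]
      exact zero_mem _
    | succ n ih =>
      refine le_restrictScalars_of_isNilpotent hnil hN fun y hy => ?_
      obtain ⟨z, hz, hyz⟩ := hδ n y (by exact_mod_cast hy)
      obtain ⟨w, hw, hwz⟩ := exists_lift_of_mem_smul_leadingForms h𝒜 hK (P := P (n + 1))
        (N := N.restrictScalars ℤ) (fun _ h => h) (fun a x hx => N.smul_mem a (ih hx)) hz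
      have hyw : ((δ y - w : L) : M) ∈ degreeLT ℳ n := by simpa using sub_mem hyz hwz
      rw [← sub_add_cancel (δ y) w]
      exact add_mem (Submodule.mem_sup_right (ih hyw)) (by exact_mod_cast hw)
  obtain ⟨n, hn⟩ := exists_nat_mem_degreeLT (ℳ := ℳ) (x : M)
  exact (mem_N x).1 (hP n hn)

lemma bijective_of_leadingForms (h𝒜 : ∀ i < 0, 𝒜 i = ⊥) (hℳ : ∀ j < 0, ℳ j = ⊥)
    {I : Ideal A} {K : Submodule ℤ A} (hK : ∀ a ∈ I, gradedComponent 𝒜 0 a ∈ K)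
    (hnil : IsNilpotent K) {φ : L →ₗ[A] L}
    (hφ : ∀ j, ∀ x : L, (x : M) ∈ degreeLT ℳ (j + 1) → ∃ z ∈ I • leadingForms 𝒜 ℳ L,
      (x - φ x : M) - gradedComponent ℳ j z ∈ degreeLT ℳ j) : Function.Bijective φ :=
  bijective_of_one_sub_pow_apply_eq_zero
    (exists_pow_apply_eq_zero_of_leadingForms h𝒜 hℳ hK hnil hφ)

end Unipotent

end GradedModule

section FreeModule

variable {A : Type*} [Ring A] (𝒜 : ℤ → AddSubgroup A) {ι : Type*} (d : ι → ℤ)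

/-- The grading of the free module on `ι` in which the basis vector `l` has degree `d l`. -/
def freeGrading (j : ℤ) : AddSubgroup (ι →₀ A) where
  carrier := {x | ∀ l, x l ∈ 𝒜 (j - d l)}
  zero_mem' _ := zero_mem _
  add_mem' hx hy l := add_mem (hx l) (hy l)
  neg_mem' hx l := neg_mem (hx l)

variable {𝒜 d}

lemma single_mem_freeGrading {i j : ℤ} {l : ι} (h : i + d l = j) {a : A} (ha : a ∈ 𝒜 i) :
    Finsupp.single l a ∈ freeGrading 𝒜 d j := fun l' => by
  classical
  rw [Finsupp.single_apply]
  split_ifs with hl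
  · subst hl h; rwa [add_sub_cancel_right]
  · exact zero_mem _

lemma freeGrading_eq_bot (h𝒜 : ∀ i < 0, 𝒜 i = ⊥) (hd : ∀ l, 0 ≤ d l) (j : ℤ) (hj : j < 0) :
    freeGrading 𝒜 d j = ⊥ := by
  refine eq_bot_iff.2 fun x hx => Finsupp.ext fun l => ?_
  have := hx l
  rwa [h𝒜 _ (by have := hd l; omega)] at this

instance [SetLike.GradedMul 𝒜] : SetLike.GradedSMul 𝒜 (freeGrading 𝒜 d) where
  smul_mem {i j a x} ha hx l := by
    have := SetLike.mul_mem_graded ha (hx l)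
    rwa [← add_sub_assoc] at this

variable {M : Type*} [AddCommGroup M] [Module A M] {ℳ : ℤ → AddSubgroup M} [Decomposition ℳ]
  [SetLike.GradedSMul 𝒜 ℳ]

lemma gradedComponent_linearCombination (v : ι → M) {j : ℤ} {x : ι →₀ A}
    (hx : x ∈ freeGrading 𝒜 d j) :
    gradedComponent ℳ j (Finsupp.linearCombination A v x) =
      Finsupp.linearCombination A (fun l => gradedComponent ℳ (d l) (v l)) x := by
  simp only [Finsupp.linearCombination_apply, Finsupp.sum, map_sum]
  exact Finset.sum_congr rfl fun l _ => by
    rw [gradedComponent_smul_of_mem (hx l), sub_sub_cancel]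

lemma isLeadingPart_linearCombination {u : ι → M} (hu : ∀ l, u l ∈ degreeLT ℳ (d l + 1)) :
    IsLeadingPart (freeGrading 𝒜 d) ℳ (Finsupp.linearCombination A u)
      (Finsupp.linearCombination A fun l => gradedComponent ℳ (d l) (u l)) := fun j x hx => by
  simp only [Finsupp.linearCombination_apply, Finsupp.sum, ← Finset.sum_sub_distrib, ← smul_sub]
  refine ⟨sum_mem fun l _ => ?_, sum_mem fun l _ =>
    smul_mem_degreeLT (by omega) (hx l) (sub_gradedComponent_mem_degreeLT (hu l))⟩
  have := SetLike.GradedSMul.smul_mem (hx l) (gradedComponent_mem ℳ (d l) (u l))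
  rwa [vadd_eq_add, sub_add_cancel] at this

variable [GradedRing 𝒜]

variable (𝒜 d) in
lemma iSup_freeGrading : ⨆ j, freeGrading 𝒜 d j = ⊤ := by
  refine eq_top_iff.2 fun x _ => ?_
  induction x using Finsupp.induction_linear with
  | zero => exact zero_mem _
  | add x y hx hy => exact add_mem (hx trivial) (hy trivial)
  | single l a =>
    obtain ⟨s, -, hs⟩ := exists_sum_gradedComponent 𝒜 a
    rw [← hs, Finsupp.single_finsetSum]
    exact sum_mem fun i _ => AddSubgroup.mem_iSup_of_mem (i + d l)
      (single_mem_freeGrading rfl (gradedComponent_mem 𝒜 i a))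

noncomputable instance : Decomposition (freeGrading 𝒜 d) :=
  (isInternal_of_iSup_eq_top_of_proj (iSup_freeGrading 𝒜 d)
    (fun j => Finsupp.liftAddHom fun l =>
      (Finsupp.singleAddHom l).comp (gradedComponent 𝒜 (j - d l)))
    fun i x hx j => by
      have h (l : ι) : gradedComponent 𝒜 (j - d l) (x l) = if i = j then x l else 0 := by
        rw [gradedComponent_of_mem (hx l)]
        exact if_congr (by omega) rfl rfl
      simp only [Finsupp.liftAddHom_apply, Finsupp.sum, AddMonoidHom.comp_apply, h,
        Finsupp.singleAddHom_apply]
      split_ifs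
      · exact x.sum_single
      · simp only [Finsupp.single_zero, Finset.sum_const_zero]).chooseDecomposition

end FreeModule

section Augmentation

variable {A : Type*} [Ring A] {S : Type*} [Ring S]

/-- A surjective ring homomorphism `f : A → S` from a graded ring onto a semisimple ring that
kills all homogeneous elements of nonzero degree and has nilpotent kernel in degree zero. -/
structure IsSemisimpleAugmentation (𝒜 : ℤ → AddSubgroup A) (f : A →+* S) : Prop where
  isSemisimpleRing : IsSemisimpleRing S
  surjective : Function.Surjective f
  map_eq_zero : ∀ i ≠ 0, ∀ a ∈ 𝒜 i, f a = 0
  isNilpotent : IsNilpotent (AddSubgroup.toIntSubmodule ((f : A →+ S).ker ⊓ 𝒜 0))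

variable {𝒜 : ℤ → AddSubgroup A} {f : A →+* S} (hf : IsSemisimpleAugmentation 𝒜 f)
include hf

namespace IsSemisimpleAugmentation

lemma isSemisimpleRing_quotient_ker : IsSemisimpleRing (A ⧸ RingHom.ker f) :=
  have := hf.isSemisimpleRing
  (RingHom.quotientKerEquivOfSurjective hf.surjective).symm.isSemisimpleRing

lemma map_gradedComponent_zero [GradedRing 𝒜] (a : A) : f (gradedComponent 𝒜 0 a) = f a := by
  induction a using Decomposition.inductionOn 𝒜 with
  | zero => simp
  | @homogeneous i a =>
    rw [gradedComponent_of_mem a.2]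
    split_ifs with hi
    · rfl
    · rw [map_zero, hf.map_eq_zero i hi a a.2]
  | add a b ha hb => simp only [map_add, ha, hb]

lemma gradedComponent_zero_mem [GradedRing 𝒜] {a : A} (ha : a ∈ RingHom.ker f) :
    gradedComponent 𝒜 0 a ∈ AddSubgroup.toIntSubmodule ((f : A →+ S).ker ⊓ 𝒜 0) :=
  ⟨(hf.map_gradedComponent_zero a).trans ha, gradedComponent_mem 𝒜 0 a⟩

end IsSemisimpleAugmentation

omit hf in
lemma exists_linearCombination_sub_mem_smul {ι : Type*} {I : Ideal A} [I.IsTwoSided]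
    [IsSemisimpleRing (A ⧸ I)] {H : Submodule A (ι →₀ A)}
    (hH : H ⊓ I • (⊤ : Submodule A (ι →₀ A)) ≤ I • H) :
    ∃ h : ι → ι →₀ A, (∀ l, h l ∈ H) ∧
      ∀ x ∈ H, x - Finsupp.linearCombination A h x ∈ I • H := by
  set P : Submodule A (ι →₀ A) := I • ⊤
  have htor : Module.IsTorsionBySet A ((ι →₀ A) ⧸ P) I := by
    rintro x ⟨a, ha⟩
    obtain ⟨y, rfl⟩ := P.mkQ_surjective x
    rw [← map_smul, Submodule.mkQ_apply, Submodule.Quotient.mk_eq_zero]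
    exact Submodule.smul_mem_smul ha trivial
  have : IsSemisimpleModule A ((ι →₀ A) ⧸ P) := by
    let := htor.module
    exact htor.isSemisimpleModule_iff.1 inferInstance
  obtain ⟨C, hC⟩ := exists_isCompl (H.map P.mkQ)
  let π := (H.map P.mkQ).projectionOnto C hC
  choose h hH' hh using fun l => Submodule.mem_map.1 (π (P.mkQ (Finsupp.single l 1))).2
  have hlc : P.mkQ ∘ₗ Finsupp.linearCombination A h = (H.map P.mkQ).subtype ∘ₗ π ∘ₗ P.mkQ := by
    ext l
    simpa using hh l
  have hlcH : LinearMap.range (Finsupp.linearCombination A h) ≤ H := by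
    rw [Finsupp.range_linearCombination, Submodule.span_le]
    exact Set.range_subset_iff.2 hH'
  refine ⟨h, hH', fun x hx => hH ⟨H.sub_mem hx (hlcH ⟨x, rfl⟩), ?_⟩⟩
  have hπ : π (P.mkQ x) = ⟨P.mkQ x, Submodule.mem_map_of_mem hx⟩ :=
    Submodule.projectionOnto_apply_left hC ⟨P.mkQ x, Submodule.mem_map_of_mem hx⟩
  have hx := LinearMap.congr_fun hlc x
  simp only [LinearMap.comp_apply, hπ] at hx
  rw [SetLike.mem_coe, ← Submodule.Quotient.mk_eq_zero, Submodule.Quotient.mk_sub, sub_eq_zero]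
  exact hx.symm

-- Modulo `ker f`, the leading forms of `L` are a direct summand of the free module. Lifting the
-- images of the basis vectors under a projection to `L` gives an endomorphism
-- of `L` that is unipotent for the degree filtration.
theorem exists_retraction_of_leadingForms_inf_smul_top_le [GradedRing 𝒜]
    (h𝒜 : ∀ i < 0, 𝒜 i = ⊥) {ι : Type*} {d : ι → ℤ} (hd : ∀ l, 0 ≤ d l)
    {L : Submodule A (ι →₀ A)}
    (hL : leadingForms 𝒜 (freeGrading 𝒜 d) L ⊓ RingHom.ker f • ⊤ ≤
      RingHom.ker f • leadingForms 𝒜 (freeGrading 𝒜 d) L) :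
    ∃ κ : (ι →₀ A) →ₗ[A] L, κ ∘ₗ L.subtype = LinearMap.id := by
  have := hf.isSemisimpleRing_quotient_ker
  obtain ⟨h, hhL, hh⟩ := exists_linearCombination_sub_mem_smul hL
  choose u huL hu using fun l => hhL l (d l)
  let ψ : (ι →₀ A) →ₗ[A] L := Finsupp.linearCombination A fun l => ⟨u l, huL l⟩
  have hψ (x) : (ψ x : ι →₀ A) = Finsupp.linearCombination A u x :=
    Finsupp.apply_linearCombination A L.subtype _ x
  have hlead := isLeadingPart_linearCombination (𝒜 := 𝒜) fun l =>
    mem_degreeLT_add_one_of_sub_mem (gradedComponent_mem _ (d l) (h l)) (hu l)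
  have hcomp (l) :=
    gradedComponent_eq_of_sub_mem_degreeLT (gradedComponent_mem _ (d l) (h l)) (hu l)
  simp only [hcomp] at hlead
  have hδ (j : ℤ) (x : L) (hx : (x : ι →₀ A) ∈ degreeLT (freeGrading 𝒜 d) (j + 1)) :
      ∃ z ∈ RingHom.ker f • leadingForms 𝒜 (freeGrading 𝒜 d) L,
        (x - (ψ ∘ₗ L.subtype) x : ι →₀ A) - gradedComponent (freeGrading 𝒜 d) j z ∈
          degreeLT (freeGrading 𝒜 d) j := by
    set q := gradedComponent (freeGrading 𝒜 d) j (x : ι →₀ A)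
    have hq : q ∈ freeGrading 𝒜 d j := gradedComponent_mem _ j _
    have hxq : (x : ι →₀ A) - q ∈ degreeLT (freeGrading 𝒜 d) j :=
      sub_gradedComponent_mem_degreeLT hx
    refine ⟨_, hh q (mem_leadingForms_of_sub_mem hq x.2 hxq), ?_⟩
    rw [map_sub, gradedComponent_linearCombination h hq, gradedComponent_of_mem hq, if_pos rfl,
      LinearMap.comp_apply, hψ, sub_sub_sub_comm]
    exact sub_mem hxq (hlead.sub_mem_degreeLT hx)
  let e := LinearEquiv.ofBijective _ (bijective_of_leadingForms h𝒜 (freeGrading_eq_bot h𝒜 hd)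
    (fun _ => hf.gradedComponent_zero_mem) hf.isNilpotent hδ)
  exact ⟨e.symm ∘ₗ ψ, LinearMap.ext fun x => e.symm_apply_apply x⟩

end Augmentation

section Dimension

open CategoryTheory Abelian

variable {R : Type u} [Ring R] {M N P W : Type u} [AddCommGroup M] [Module R M]
  [AddCommGroup N] [Module R N] [AddCommGroup P] [Module R P] [AddCommGroup W] [Module R W]

lemma pdLE_iff_hasProjectiveDimensionLE {n : ℕ} :
    pdLE R n M ↔ HasProjectiveDimensionLE (ModuleCat.of R M) n := by
  induction n generalizing M with
  | zero => rw [pdLE, IsProjective.iff_projective, projective_iff_hasProjectiveDimensionLE_zero]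
  | succ n ih =>
    have pdLE_ker_iff (P : Type u) [AddCommGroup P] [Module R P] (f : P →ₗ[R] M)
        [Module.Projective R P] (hf : Function.Surjective f) :
        pdLE R n (LinearMap.ker f) ↔ HasProjectiveDimensionLE (ModuleCat.of R M) (n + 1) := by
      rw [ih]
      exact ((LinearMap.shortExact_shortComplexKer hf).hasProjectiveDimensionLT_X₃_iff n
        ((IsProjective.iff_projective P).1 inferInstance)).symm
    refine ⟨?_, fun h => ?_⟩
    · rintro ⟨P, _, _, f, _, hf, h⟩
      exact (pdLE_ker_iff P f hf).1 h
    · exact ⟨M →₀ R, inferInstance, inferInstance, Finsupp.linearCombination R id, inferInstance,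
        Finsupp.linearCombination_id_surjective R M,
        (pdLE_ker_iff _ _ (Finsupp.linearCombination_id_surjective R M)).2 h⟩

lemma pdLE.mono {m n : ℕ} (hmn : m ≤ n) (h : pdLE R m M) : pdLE R n M := by
  rw [pdLE_iff_hasProjectiveDimensionLE] at *
  exact hasProjectiveDimensionLT_of_ge _ (m + 1) _ (by omega)

lemma pdLE.congr {n : ℕ} (e : M ≃ₗ[R] N) (h : pdLE R n M) : pdLE R n N := by
  rw [pdLE_iff_hasProjectiveDimensionLE] at *
  exact hasProjectiveDimensionLT_of_iso e.toModuleIso _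

lemma projDim_le_iff {n : ℕ} : projDim R M ≤ n ↔ pdLE R n M := by
  refine ⟨fun h => ?_, fun h => iInf₂_le n h⟩
  have hlt : projDim R M < (n + 1 : ℕ) := h.trans_lt (by exact_mod_cast n.lt_succ_self)
  simp only [projDim, iInf_lt_iff] at hlt
  obtain ⟨m, hm, hmn⟩ := hlt
  exact hm.mono (Nat.lt_succ_iff.1 (by exact_mod_cast hmn))

lemma globalDim_le_iff {n : ℕ} :
    globalDim R ≤ n ↔ ∀ (M : Type u) [AddCommGroup M] [Module R M], pdLE R n M := by
  rw [globalDim, iSup_le_iff]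
  exact ⟨fun h M _ _ => projDim_le_iff.1 (h (ModuleCat.of R M)), fun h M => projDim_le_iff.2 (h M)⟩

section Exact

variable {f : N →ₗ[R] P} {g : P →ₗ[R] M} (hf : Function.Injective f) (hfg : Function.Exact f g)
  (hg : Function.Surjective g)
include hf hfg hg

lemma exists_extension_of_subsingleton_ext
    [Subsingleton (Ext.{u} (ModuleCat.of R M) (ModuleCat.of R W) 1)] (φ : N →ₗ[R] W) :
    ∃ φ' : P →ₗ[R] W, φ' ∘ₗ f = φ := by
  let S : ShortComplex (ModuleCat.{u} R) :=
    ModuleCat.shortComplexOfCompEqZero f g hfg.linearMap_comp_eq_zero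
  obtain ⟨y, hy⟩ := Ext.contravariant_sequence_exact₁
    (ModuleCat.shortComplex_shortExact S hfg hf hg) _ (Ext.mk₀ (ModuleCat.ofHom φ))
    (n₁ := 1) rfl (Subsingleton.elim _ _)
  obtain ⟨φ', rfl⟩ := Ext.homEquiv₀.symm.surjective y
  rw [Ext.homEquiv₀_symm_apply, Ext.mk₀_comp_mk₀] at hy
  exact ⟨φ'.hom, congrArg ModuleCat.Hom.hom (Ext.homEquiv₀.symm.injective hy)⟩

lemma subsingleton_ext_of_subsingleton_ext_succ [Module.Projective R P] {n : ℕ}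
    [Subsingleton (Ext.{u} (ModuleCat.of R M) (ModuleCat.of R W) (n + 2))] :
    Subsingleton (Ext.{u} (ModuleCat.of R N) (ModuleCat.of R W) (n + 1)) := by
  let S : ShortComplex (ModuleCat.{u} R) :=
    ModuleCat.shortComplexOfCompEqZero f g hfg.linearMap_comp_eq_zero
  have hP : Projective (ModuleCat.of R P) := (IsProjective.iff_projective P).1 inferInstance
  refine subsingleton_of_forall_eq 0 fun x => ?_
  obtain ⟨y, hy⟩ := Ext.contravariant_sequence_exact₁
    (ModuleCat.shortComplex_shortExact S hfg hf hg) _ x (n₁ := n + 2) (by omega)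
    (Subsingleton.elim _ _)
  rw [← hy, Ext.eq_zero_of_projective y, Ext.comp_zero]

end Exact

lemma projective_of_exact_of_retraction [Module.Projective R P] {f : N →ₗ[R] P} {g : P →ₗ[R] M}
    (hfg : Function.Exact f g) (hg : Function.Surjective g) {κ : P →ₗ[R] N}
    (hκ : κ ∘ₗ f = LinearMap.id) : Module.Projective R M := by
  have hsplit := hfg.split_tfae'.out 1 0
  obtain ⟨-, l, hl⟩ := hsplit.1 ⟨hg, κ, hκ⟩
  exact Module.Projective.of_split l g hl

end Dimension

section Resolution

open CategoryTheory Abelian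

section FilteredGenerator

variable {A : Type*} [Ring A] {M : Type*} [AddCommGroup M] [Module A M] (ℳ : ℤ → AddSubgroup M)
  [Decomposition ℳ] (L : Submodule A M)

/-- Generators of a submodule `L` of a graded module: pairs of a degree `n` and an element of `L`
without components of degree greater than `n`. -/
abbrev FilteredGenerator : Type _ :=
  {p : ℕ × M // p.2 ∈ L ∧ p.2 ∈ degreeLT ℳ (p.1 + 1)}

namespace FilteredGenerator

variable {ℳ L} in
/-- The degree assigned to a generator, at least the degree of the underlying element. -/
def degree (p : FilteredGenerator ℳ L) : ℤ := p.1.1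

/-- The presentation of a submodule by its filtered generators. -/
noncomputable def lift : (FilteredGenerator ℳ L →₀ A) →ₗ[A] M :=
  Finsupp.linearCombination A fun p => p.1.2

/-- The presentation of the leading forms of a submodule that is the leading part of `lift`. -/
noncomputable def gradedLift : (FilteredGenerator ℳ L →₀ A) →ₗ[A] M :=
  Finsupp.linearCombination A fun p => gradedComponent ℳ p.degree p.1.2

lemma range_lift : LinearMap.range (lift ℳ L) = L := by
  rw [lift, Finsupp.range_linearCombination]
  refine le_antisymm (Submodule.span_le.2 ?_) fun x hx => ?_
  · rintro _ ⟨p, rfl⟩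
    exact p.2.1
  · obtain ⟨n, hn⟩ := exists_nat_mem_degreeLT (ℳ := ℳ) x
    exact Submodule.subset_span ⟨⟨(n, x), hx, degreeLT_mono (by omega) hn⟩, rfl⟩

variable (𝒜 : ℤ → AddSubgroup A)

lemma isLeadingPart_gradedLift [SetLike.GradedSMul 𝒜 ℳ] :
    IsLeadingPart (freeGrading 𝒜 (degree (ℳ := ℳ) (L := L))) ℳ (lift ℳ L) (gradedLift ℳ L) :=
  isLeadingPart_linearCombination fun p => p.2.2

lemma isStrict_lift [GradedRing 𝒜] (hℳ : ∀ j < 0, ℳ j = ⊥) :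
    IsStrict (freeGrading 𝒜 (degree (ℳ := ℳ) (L := L))) ℳ (lift ℳ L) := fun j y hy hyj => by
  rcases le_or_gt j 0 with hj | hj
  · exact ⟨0, zero_mem _, by rw [map_zero, eq_zero_of_mem_degreeLT hℳ hj hyj]⟩
  · obtain ⟨k, rfl⟩ : ∃ k : ℕ, j = k + 1 := ⟨(j - 1).toNat, by omega⟩
    let p : FilteredGenerator ℳ L := ⟨(k, y), (range_lift ℳ L).le hy, hyj⟩
    have hp : Finsupp.single p 1 ∈ freeGrading 𝒜 degree (k : ℤ) :=
      single_mem_freeGrading (zero_add p.degree) SetLike.GradedOne.one_mem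
    refine ⟨Finsupp.single p 1, mem_degreeLT_of_mem (lt_add_one (k : ℤ)) hp, ?_⟩
    rw [lift, Finsupp.linearCombination_single, one_smul]

end FilteredGenerator

end FilteredGenerator

variable {A : Type u} [Ring A] {I : Ideal A} {W : Type u} [AddCommGroup W] [Module A W]

variable (I W) in
/-- `W` detects the inclusion `H ∩ I G ⊆ I H` for submodules `H` of free modules `G`: it holds
whenever all linear maps `H → W` extend to `G`. -/
def DetectsSMul : Prop :=
  ∀ ⦃ι : Type u⦄ (H : Submodule A (ι →₀ A)),
    (∀ φ : H →ₗ[A] W, ∃ φ' : (ι →₀ A) →ₗ[A] W, φ' ∘ₗ H.subtype = φ) → H ⊓ I • ⊤ ≤ I • H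

variable {𝒜 : ℤ → AddSubgroup A} [GradedRing 𝒜]

lemma subsingleton_ext_quotient_leadingForms {M : Type u} [AddCommGroup M] [Module A M]
    {ℳ : ℤ → AddSubgroup M} [Decomposition ℳ] [SetLike.GradedSMul 𝒜 ℳ] [Module.Projective A M]
    (hℳ : ∀ j < 0, ℳ j = ⊥) {L : Submodule A M} {n : ℕ}
    [Subsingleton (Ext.{u} (ModuleCat.of A (M ⧸ leadingForms 𝒜 ℳ L)) (ModuleCat.of A W) (n + 2))] :
    Subsingleton (Ext.{u} (ModuleCat.of A ((FilteredGenerator ℳ L →₀ A) ⧸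
      leadingForms 𝒜 (freeGrading 𝒜 FilteredGenerator.degree)
        (LinearMap.ker (FilteredGenerator.lift ℳ L)))) (ModuleCat.of A W) (n + 1)) := by
  have hlead := FilteredGenerator.isLeadingPart_gradedLift ℳ L 𝒜
  have hstrict := FilteredGenerator.isStrict_lift ℳ L 𝒜 hℳ
  have hker := hlead.ker_eq_leadingForms 𝒜 hstrict
  refine subsingleton_ext_of_subsingleton_ext_succ
    (f := Submodule.liftQ _ (FilteredGenerator.gradedLift ℳ L) hker.ge)
    (g := (leadingForms 𝒜 ℳ L).mkQ)
    (LinearMap.ker_eq_bot.1 (Submodule.ker_liftQ_eq_bot _ _ _ hker.le))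
    (LinearMap.exact_iff.2 ?_) (Submodule.mkQ_surjective _)
  rw [Submodule.ker_mkQ, Submodule.range_liftQ, hlead.range_eq_leadingForms 𝒜 hstrict,
    FilteredGenerator.range_lift]

variable {S : Type u} [Ring S] {f : A →+* S} (hf : IsSemisimpleAugmentation 𝒜 f)
  (h𝒜 : ∀ i < 0, 𝒜 i = ⊥) (hW : DetectsSMul (RingHom.ker f) W) {n : ℕ}
include hf h𝒜 hW

lemma pdLE_range_of_subsingleton_ext_leadingForms {ι M : Type u} [AddCommGroup M] [Module A M]
    {d : ι → ℤ} (hd : ∀ l, 0 ≤ d l) (q : (ι →₀ A) →ₗ[A] M)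
    [Subsingleton (Ext.{u} (ModuleCat.of A
      ((ι →₀ A) ⧸ leadingForms 𝒜 (freeGrading 𝒜 d) (LinearMap.ker q)))
      (ModuleCat.of A W) (n + 1))] :
    pdLE A n (LinearMap.range q) := by
  induction n generalizing ι M with
  | zero =>
    have hlead := hW (leadingForms 𝒜 (freeGrading 𝒜 d) (LinearMap.ker q)) fun φ =>
      exists_extension_of_subsingleton_ext (Submodule.injective_subtype _)
        (LinearMap.exact_subtype_mkQ _) (Submodule.mkQ_surjective _) φ
    obtain ⟨κ, hκ⟩ := exists_retraction_of_leadingForms_inf_smul_top_le hf h𝒜 hd hlead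
    have hexact : Function.Exact (LinearMap.ker q).subtype q.rangeRestrict :=
      LinearMap.exact_iff.2 (by rw [LinearMap.ker_rangeRestrict, Submodule.range_subtype])
    rw [pdLE]
    exact projective_of_exact_of_retraction (N := LinearMap.ker q) hexact
      q.surjective_rangeRestrict hκ
  | succ n ih =>
    have := subsingleton_ext_quotient_leadingForms (𝒜 := 𝒜) (W := W) (freeGrading_eq_bot h𝒜 hd)
      (L := LinearMap.ker q) (n := n)
    have hker := ih (d := FilteredGenerator.degree) (fun p => Int.natCast_nonneg p.1.1)
      (FilteredGenerator.lift (freeGrading 𝒜 d) (LinearMap.ker q))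
    rw [FilteredGenerator.range_lift, ← LinearMap.ker_rangeRestrict] at hker
    exact ⟨ι →₀ A, inferInstance, inferInstance, q.rangeRestrict, inferInstance,
      q.surjective_rangeRestrict, hker⟩

theorem pdLE_of_hasInjectiveDimensionLE (hn : HasInjectiveDimensionLE (ModuleCat.of A W) n)
    (M : Type u) [AddCommGroup M] [Module A M] : pdLE A n M := by
  have (X : Type u) [AddCommGroup X] [Module A X] :
      Subsingleton (Ext.{u} (ModuleCat.of A X) (ModuleCat.of A W) (n + 1)) :=
    subsingleton_of_forall_eq 0 fun x => x.eq_zero_of_hasInjectiveDimensionLT (n + 1) le_rfl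
  have hrange := pdLE_range_of_subsingleton_ext_leadingForms hf h𝒜 hW (n := n) (d := fun _ : M => 0)
    (fun _ => le_rfl) (Finsupp.linearCombination A id)
  exact hrange.congr (LinearEquiv.ofTop _
    (LinearMap.range_eq_top.2 (Finsupp.linearCombination_id_surjective A M)))

end Resolution

section Duality

open MulOpposite CategoryTheory

namespace CharacterDual

variable {A : Type u} [Ring A] {N N' : Type u} [AddCommGroup N] [Module A N] [AddCommGroup N']
  [Module A N']

/-- The right action `(χ a) x = χ (a x)` on the character module of a left module. -/
instance : Module Aᵐᵒᵖ (CharacterModule N) :=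
  inferInstanceAs (Module Aᵈᵐᵃ (N →+ AddCircle (1 : ℚ)))

lemma smul_apply (a : Aᵐᵒᵖ) (χ : CharacterModule N) (x : N) : (a • χ) x = χ (unop a • x) := rfl

/-- The transpose of a linear map, as a map of right modules. -/
def map (f : N →ₗ[A] N') : CharacterModule N' →ₗ[Aᵐᵒᵖ] CharacterModule N where
  toFun χ := AddMonoidHom.comp χ f.toAddMonoidHom
  map_add' _ _ := rfl
  map_smul' a χ := CharacterModule.ext _ fun x => congrArg χ (f.map_smul (unop a) x).symm

lemma map_apply (f : N →ₗ[A] N') (χ : CharacterModule N') (x : N) : map f χ x = χ (f x) := rfl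

lemma map_surjective {f : N →ₗ[A] N'} (hf : Function.Injective f) : Function.Surjective (map f) :=
  CharacterModule.dual_surjective_of_injective (f.restrictScalars ℤ) hf

lemma map_injective {f : N →ₗ[A] N'} (hf : Function.Surjective f) : Function.Injective (map f) :=
  CharacterModule.dual_injective_of_surjective (f.restrictScalars ℤ) hf

lemma exact_map_subtype_ker {f : N →ₗ[A] N'} (hf : Function.Surjective f) :
    Function.Exact (map f) (map (LinearMap.ker f).subtype) := fun χ => by
  refine ⟨fun h => ?_, ?_⟩
  · have hχ (x : N) (hx : f x = 0) : χ x = 0 := DFunLike.congr_fun h ⟨x, hx⟩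
    exact ⟨f.toAddMonoidHom.liftOfSurjective hf ⟨χ, hχ⟩, CharacterModule.ext _ fun x =>
      AddMonoidHom.liftOfRightInverse_comp_apply f.toAddMonoidHom _
        (Function.rightInverse_surjInv hf) ⟨χ, hχ⟩ x⟩
  · rintro ⟨ψ, rfl⟩
    refine CharacterModule.ext _ fun x => ?_
    rw [map_apply, map_apply, Submodule.subtype_apply, LinearMap.mem_ker.1 x.2, map_zero]
    rfl

variable {X : Type u} [AddCommGroup X] [Module Aᵐᵒᵖ X]

/-- The map `x ↦ (a ↦ χ (x a))` from a right module to the character module of the ring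
determined by a character `χ`. -/
def homOfCharacter (χ : CharacterModule X) : X →ₗ[Aᵐᵒᵖ] CharacterModule A where
  toFun x := AddMonoidHom.mk' (fun a => χ (op a • x)) fun a b => by
    rw [MulOpposite.op_add, add_smul, map_add]
  map_add' x y := CharacterModule.ext _ fun a => by
    exact (congrArg χ (smul_add (op a) x y)).trans (map_add χ _ _)
  map_smul' b x := CharacterModule.ext _ fun a => congrArg χ (mul_smul (op a) b x).symm

/-- The map from a right module to the character module of a free module determined by a
character for each basis vector. -/
noncomputable def homOfCharacters {ι : Type u} (χ : ι → CharacterModule X) :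
    X →ₗ[Aᵐᵒᵖ] CharacterModule (ι →₀ A) where
  toFun x := AddMonoidHom.mk' (fun v => v.sum fun l a => homOfCharacter (χ l) x a) fun _ _ =>
    Finsupp.sum_add_index' (fun l => map_zero (homOfCharacter (χ l) x))
      fun l => map_add (homOfCharacter (χ l) x)
  map_add' x y := CharacterModule.ext _ fun v => (Finsupp.sum_congr fun l _ =>
    DFunLike.congr_fun (map_add (homOfCharacter (χ l)) x y) (v l)).trans Finsupp.sum_add
  map_smul' b x := CharacterModule.ext _ fun v => (Finsupp.sum_congr fun l _ =>
    DFunLike.congr_fun (map_smul (homOfCharacter (χ l)) b x) (v l)).trans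
      (Finsupp.sum_smul_index' fun l => map_zero (homOfCharacter (χ l) x)).symm

instance injective [Module.Projective A N] : Module.Injective Aᵐᵒᵖ (CharacterModule N) where
  out X Y _ _ _ _ f hf g := by
    obtain ⟨s, hs⟩ := Module.projective_def'.1 ‹Module.Projective A N›
    have hext (n : N) := CharacterModule.dual_surjective_of_injective (f.restrictScalars ℤ) hf
      (AddMonoidHom.mk' (fun x => g x n) fun x y => by rw [map_add]; rfl)
    choose χ hχ using hext
    refine ⟨map s ∘ₗ homOfCharacters χ, fun x => CharacterModule.ext _ fun n => ?_⟩
    have hn : (s n).sum (fun m a => a • m) = n := LinearMap.congr_fun hs n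
    have hχ (m : N) (y : X) : χ m (f y) = g y m := DFunLike.congr_fun (hχ m) y
    calc (s n).sum (fun m a => χ m (op a • f x))
        = (s n).sum (fun m a => g x (a • m)) := Finsupp.sum_congr fun m _ => by
          rw [← map_smul, hχ, map_smul, smul_apply, unop_op]
      _ = g x n := by rw [← map_finsuppSum, hn]

lemma hasInjectiveDimensionLE {n : ℕ} (h : pdLE A n N) :
    HasInjectiveDimensionLE (ModuleCat.of Aᵐᵒᵖ (CharacterModule N)) n := by
  induction n generalizing N with
  | zero =>
    rw [pdLE] at h
    exact injective_iff_hasInjectiveDimensionLT_one.1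
      ((Module.injective_iff_injective_object Aᵐᵒᵖ _).1 injective)
  | succ n ih =>
    obtain ⟨P, _, _, f, hP, hf, h⟩ := h
    let S : ShortComplex (ModuleCat.{u} Aᵐᵒᵖ) :=
      ModuleCat.shortComplexOfCompEqZero _ _ (exact_map_subtype_ker hf).linearMap_comp_eq_zero
    have hS : S.ShortExact := ModuleCat.shortComplex_shortExact S (exact_map_subtype_ker hf)
      (map_injective hf) (map_surjective (LinearMap.ker f).injective_subtype)
    exact (hS.hasInjectiveDimensionLT_X₃_iff n
      ((Module.injective_iff_injective_object Aᵐᵒᵖ _).1 injective)).1 (ih h)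

lemma exists_apply_ne_zero_of_notMem {R M : Type*} [Ring R] [AddCommGroup M] [Module R M]
    {K : Submodule R M} {x : M} (hx : x ∉ K) :
    ∃ χ : CharacterModule M, (∀ y ∈ K, χ y = 0) ∧ χ x ≠ 0 := by
  have hx : K.mkQ x ≠ 0 := fun h => hx ((Submodule.Quotient.mk_eq_zero K).1 h)
  obtain ⟨χ, hχ⟩ := CharacterModule.exists_character_apply_ne_zero_of_ne_zero hx
  refine ⟨AddMonoidHom.comp χ K.mkQ.toAddMonoidHom, fun y hy => ?_, hχ⟩
  exact (congrArg χ ((Submodule.Quotient.mk_eq_zero K).2 hy)).trans (map_zero χ)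

variable {I : Ideal Aᵐᵒᵖ} {J : Ideal A} (hIJ : ∀ a, op a ∈ I ↔ a ∈ J)
include hIJ

lemma exists_map_mkQ_comp_eq_homOfCharacter {χ : CharacterModule X}
    (hχ : ∀ a ∈ I, ∀ x, χ (a • x) = 0) :
    ∃ φ : X →ₗ[Aᵐᵒᵖ] CharacterModule (A ⧸ J), map J.mkQ ∘ₗ φ = homOfCharacter χ := by
  have hrange (x : X) : homOfCharacter χ x ∈ LinearMap.range (map J.mkQ) :=
    (exact_map_subtype_ker J.mkQ_surjective _).1 <| CharacterModule.ext _ fun a =>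
      hχ _ ((hIJ _).2 (J.ker_mkQ.le a.2)) x
  let e := LinearEquiv.ofInjective (map J.mkQ) (map_injective J.mkQ_surjective)
  refine ⟨e.symm ∘ₗ (homOfCharacter χ).codRestrict _ hrange, LinearMap.ext fun x => ?_⟩
  exact congrArg Subtype.val (e.apply_symm_apply ⟨_, hrange x⟩)

lemma smul_quotient_eq_zero [J.IsTwoSided] {b : Aᵐᵒᵖ} (hb : b ∈ I)
    (χ : CharacterModule (A ⧸ J)) : b • χ = 0 :=
  CharacterModule.ext _ fun x => by
    obtain ⟨a, rfl⟩ := J.mkQ_surjective x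
    have hba : J.mkQ (unop b • a) = 0 :=
      (Submodule.Quotient.mk_eq_zero J).2 (J.mul_mem_right a ((hIJ _).1 hb))
    rw [smul_apply, ← map_smul, hba, map_zero]
    rfl

-- A character of `H` vanishing on `I • H` corresponds to a map from `H` to the character module of
-- `A ⧸ J`, and an extension of that map to the free module vanishes on `I • ⊤`.
theorem detectsSMul [J.IsTwoSided] : DetectsSMul I (CharacterModule (A ⧸ J)) := by
  rintro ι H hH x ⟨hxH, hx⟩
  by_contra hxI
  obtain ⟨χ, hχ, hχx⟩ := exists_apply_ne_zero_of_notMem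
    (K := (I • H).comap H.subtype) (x := (⟨x, hxH⟩ : H)) hxI
  obtain ⟨φ, hφ⟩ := exists_map_mkQ_comp_eq_homOfCharacter hIJ (χ := χ) fun a ha y =>
    hχ _ (Submodule.smul_mem_smul ha y.2)
  obtain ⟨φ', hφ'⟩ := hH φ
  have hker : I • ⊤ ≤ LinearMap.ker φ' := Submodule.smul_le.2 fun a ha y _ => by
    rw [LinearMap.mem_ker, map_smul, smul_quotient_eq_zero hIJ ha]
  have hχ0 : (homOfCharacter χ ⟨x, hxH⟩ : CharacterModule A) = 0 := by
    rw [← hφ, ← hφ', LinearMap.comp_apply, LinearMap.comp_apply, Submodule.subtype_apply,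
      LinearMap.mem_ker.1 (hker hx), map_zero]
  apply hχx
  rw [← one_smul Aᵐᵒᵖ (⟨x, hxH⟩ : H)]
  exact DFunLike.congr_fun hχ0 1

end CharacterDual

end Duality

section SimpleModule

variable {A : Type u} [Ring A] {M : Type u} [AddCommGroup M] [Module A M]

lemma pdLE_of_isFiniteLength_of_isTorsionBySet {J : Set A} {n : ℕ}
    (h : ∀ (N : Type u) [AddCommGroup N] [Module A N], IsSimpleModule A N →
      Module.IsTorsionBySet A N J → pdLE A n N)
    (hM : IsFiniteLength A M) (hJ : Module.IsTorsionBySet A M J) : pdLE A n M := by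
  induction hM with
  | @of_subsingleton M =>
    have hproj : pdLE A 0 M := Module.Projective.of_free
    exact hproj.mono n.zero_le
  | @of_simple_quotient M _ _ N hN _ ih =>
    have hpdN := (ih fun x a => Subtype.ext (@hJ x a)).congr
      (LinearEquiv.ofEq _ _ N.ker_mkQ.symm)
    have hpdQ := h (M ⧸ N) hN fun x a => by
      obtain ⟨x, rfl⟩ := N.mkQ_surjective x
      rw [← map_smul, @hJ x a, map_zero]
    rw [pdLE_iff_hasProjectiveDimensionLE] at hpdN hpdQ ⊢
    exact (LinearMap.shortExact_shortComplexKer N.mkQ_surjective).hasProjectiveDimensionLT_X₂ _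
      hpdN hpdQ

lemma pdLE_quotient_of_isSemisimpleRing {J : Ideal A} [J.IsTwoSided] [IsSemisimpleRing (A ⧸ J)]
    {n : ℕ} (h : ∀ (N : Type u) [AddCommGroup N] [Module A N], IsSimpleModule A N →
      Module.IsTorsionBySet A N J → pdLE A n N) : pdLE A n (A ⧸ J) := by
  have htor : Module.IsTorsionBySet A (A ⧸ J) J := fun x a => by
    obtain ⟨x, rfl⟩ := J.mkQ_surjective x
    exact (Submodule.Quotient.mk_eq_zero J).2 (J.mul_mem_right x a.2)
  have hsemisimple : IsSemisimpleModule A (A ⧸ J) := by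
    let := htor.module
    exact htor.isSemisimpleModule_iff.1 inferInstance
  have hfinite : Module.Finite A (A ⧸ J) := inferInstance
  exact pdLE_of_isFiniteLength_of_isTorsionBySet h
    ((IsSemisimpleModule.finite_tfae.out 0 3).1 hfinite) htor

variable {𝒜 : ℤ → AddSubgroup A}

lemma exists_isGradedSimple_of_isSimpleModule [IsSimpleModule A M]
    (hM : ∀ i ≠ 0, ∀ a ∈ 𝒜 i, ∀ x : M, a • x = 0) :
    ∃ ℳ : ℤ → AddSubgroup M, IsGradedSimple A 𝒜 M ℳ := by
  let ℳ (j : ℤ) : AddSubgroup M := if j = 0 then ⊤ else ⊥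
  have hℳ (j : ℤ) (hj : j ≠ 0) : ℳ j = ⊥ := if_neg hj
  refine ⟨ℳ, ⟨?_, fun i j a x ha hx => ?_⟩, IsSimpleModule.nontrivial A M,
    fun p _ => eq_bot_or_eq_top p⟩
  · refine isInternal_of_iSup_eq_top_of_proj (top_unique (le_iSup ℳ 0))
      (fun j => if j = 0 then AddMonoidHom.id M else 0) fun i x hx j => ?_
    rcases eq_or_ne i 0 with rfl | hi
    · split_ifs <;> first | rfl | omega
    · rw [hℳ i hi, AddSubgroup.mem_bot] at hx
      rw [hx, map_zero, ite_self]
  · rcases eq_or_ne i 0 with rfl | hi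
    · rcases eq_or_ne j 0 with rfl | hj
      · exact AddSubgroup.mem_top _
      · rw [hℳ j hj, AddSubgroup.mem_bot] at hx
        rw [hx, smul_zero]
        exact zero_mem _
    · rw [hM i hi a ha x]
      exact zero_mem _

variable {S : Type*} [Ring S] {f : A →+* S}

lemma pdLE_quotient_ker_of_isGradedSimple (hf : IsSemisimpleAugmentation 𝒜 f) {n : ℕ}
    (h : ∀ (N : Type u) [AddCommGroup N] [Module A N] (𝒩 : ℤ → AddSubgroup N),
      IsGradedSimple A 𝒜 N 𝒩 → pdLE A n N) : pdLE A n (A ⧸ RingHom.ker f) := by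
  have := hf.isSemisimpleRing_quotient_ker
  refine pdLE_quotient_of_isSemisimpleRing fun N _ _ _ hN => ?_
  obtain ⟨𝒩, h𝒩⟩ := exists_isGradedSimple_of_isSimpleModule (𝒜 := 𝒜) (M := N)
    fun i hi a ha x => @hN x ⟨a, hf.map_eq_zero i hi a ha⟩
  exact h N 𝒩 h𝒩

end SimpleModule

section Opposite

open MulOpposite

section OpGrading

variable {A : Type u} [Ring A] (𝒜 : ℤ → AddSubgroup A)

/-- The opposite ring, graded by the same homogeneous components. -/
def opGrading (i : ℤ) : AddSubgroup Aᵐᵒᵖ := (𝒜 i).comap opAddEquiv.symm.toAddMonoidHom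

lemma mem_opGrading {i : ℤ} {a : Aᵐᵒᵖ} : a ∈ opGrading 𝒜 i ↔ unop a ∈ 𝒜 i := Iff.rfl

lemma opGrading_eq_bot {i : ℤ} (h : 𝒜 i = ⊥) : opGrading 𝒜 i = ⊥ := by
  ext a
  rw [mem_opGrading, h, AddSubgroup.mem_bot, AddSubgroup.mem_bot, unop_eq_zero_iff]

lemma isInternal_opGrading [Decomposition 𝒜] : IsInternal (opGrading 𝒜) := by
  refine isInternal_of_iSup_eq_top_of_proj (eq_top_iff.2 fun a _ => ?_)
    (fun j => (opAddEquiv.toAddMonoidHom.comp (gradedComponent 𝒜 j)).comp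
      opAddEquiv.symm.toAddMonoidHom) fun i a ha j => ?_
  · obtain ⟨s, -, hs⟩ := exists_sum_gradedComponent 𝒜 (unop a)
    rw [← op_unop a, ← hs, Finset.op_sum]
    exact sum_mem fun i _ => AddSubgroup.mem_iSup_of_mem (S := opGrading 𝒜) i
      (gradedComponent_mem 𝒜 i (unop a))
  · exact (congrArg op (gradedComponent_of_mem (ℳ := 𝒜) ha j)).trans (apply_ite op _ _ _)

noncomputable instance [GradedRing 𝒜] : GradedRing (opGrading 𝒜) where
  one_mem := SetLike.GradedOne.one_mem (A := 𝒜)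
  mul_mem i j a b ha hb := by
    rw [mem_opGrading, add_comm]
    exact SetLike.GradedMul.mul_mem (A := 𝒜) hb ha
  toDecomposition := (isInternal_opGrading 𝒜).chooseDecomposition

lemma IsSemisimpleAugmentation.op {𝒜 : ℤ → AddSubgroup A} {S : Type*} [Ring S] {f : A →+* S}
    (hf : IsSemisimpleAugmentation 𝒜 f) :
    IsSemisimpleAugmentation (opGrading 𝒜) (RingHom.op f) where
  isSemisimpleRing := have := hf.isSemisimpleRing; inferInstance
  surjective s := by
    obtain ⟨a, ha⟩ := hf.surjective (unop s)
    exact ⟨MulOpposite.op a, unop_injective ha⟩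
  map_eq_zero i hi a ha := unop_injective (hf.map_eq_zero i hi _ ha)
  isNilpotent := by
    obtain ⟨n, hn⟩ := hf.isNilpotent
    refine ⟨n, ?_⟩
    have hK : AddSubgroup.toIntSubmodule ((RingHom.op f : Aᵐᵒᵖ →+ Sᵐᵒᵖ).ker ⊓ opGrading 𝒜 0) =
        (AddSubgroup.toIntSubmodule ((f : A →+ S).ker ⊓ 𝒜 0)).comap
          ((opLinearEquiv ℤ : A ≃ₗ[ℤ] Aᵐᵒᵖ).symm : Aᵐᵒᵖ →ₗ[ℤ] A) := by
      ext a
      exact and_congr_left' (op_eq_zero_iff (f (unop a)))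
    rw [hK, ← Submodule.comap_unop_pow, hn]
    exact LinearMap.ker_eq_bot.2 (opLinearEquiv ℤ : A ≃ₗ[ℤ] Aᵐᵒᵖ).symm.injective

end OpGrading

section DegreeZero

variable {A : Type u} [Ring A] {𝒜 : ℤ → AddSubgroup A} [GradedRing 𝒜] (h𝒜 : ∀ i < 0, 𝒜 i = ⊥)

include h𝒜 in
lemma gradedComponent_zero_mul (a b : A) :
    gradedComponent 𝒜 0 (a * b) = gradedComponent 𝒜 0 a * gradedComponent 𝒜 0 b := by
  induction a using Decomposition.inductionOn 𝒜 with
  | zero => rw [zero_mul, map_zero, zero_mul]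
  | @homogeneous i a =>
    rw [← smul_eq_mul, gradedComponent_smul_of_mem a.2, gradedComponent_of_mem a.2, smul_eq_mul]
    rcases lt_trichotomy i 0 with hi | rfl | hi
    · have ha : (a : A) = 0 := (AddSubgroup.eq_bot_iff_forall _).1 (h𝒜 i hi) a a.2
      rw [ha, ite_self, zero_mul, zero_mul]
    · rw [if_pos rfl, sub_zero]
    · have hb := (AddSubgroup.eq_bot_iff_forall _).1 (h𝒜 (0 - i) (by omega)) _
        (gradedComponent_mem 𝒜 (0 - i) b)
      rw [hb, if_neg hi.ne', mul_zero, zero_mul]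
  | add a₁ a₂ h₁ h₂ => rw [add_mul, map_add, h₁, h₂, map_add, add_mul]

/-- The projection of a nonnegatively graded ring onto its degree zero part. -/
noncomputable def degreeZeroHom : A →+* 𝒜 0 where
  toFun a := ⟨gradedComponent 𝒜 0 a, gradedComponent_mem 𝒜 0 a⟩
  map_one' := Subtype.ext (decompose_of_mem_same 𝒜 SetLike.GradedOne.one_mem)
  map_mul' a b := Subtype.ext (gradedComponent_zero_mul h𝒜 a b)
  map_zero' := Subtype.ext (map_zero _)
  map_add' a b := Subtype.ext (map_add _ a b)

lemma degreeZeroHom_coe (a : 𝒜 0) : degreeZeroHom h𝒜 a = a :=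
  Subtype.ext (decompose_of_mem_same 𝒜 a.2)

omit h𝒜 in
lemma isNilpotent_toIntSubmodule_map_coe {I : Ideal (𝒜 0)} (hI : IsNilpotent I) :
    IsNilpotent (AddSubgroup.toIntSubmodule (I.toAddSubgroup.map (𝒜 0).subtype)) := by
  obtain ⟨n, hn⟩ := hI
  let ι : 𝒜 0 →ₐ[ℤ] A := (SetLike.GradeZero.subring 𝒜).subtype.toIntAlgHom
  refine ⟨n + 1, ?_⟩
  calc (Submodule.map ι.toLinearMap (I.restrictScalars ℤ)) ^ (n + 1)
      = Submodule.map ι.toLinearMap ((I ^ (n + 1)).restrictScalars ℤ) := by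
        rw [Submodule.restrictScalars_pow n.succ_ne_zero, Submodule.map_pow]
    _ = ⊥ := by
        rw [Submodule.pow_succ, hn, zero_mul]
        exact Submodule.map_bot _

theorem isSemisimpleAugmentation_mk_jacobson [IsSemiprimaryRing (𝒜 0)] :
    IsSemisimpleAugmentation 𝒜
      ((Ideal.Quotient.mk (Ring.jacobson (𝒜 0))).comp (degreeZeroHom h𝒜)) where
  isSemisimpleRing := inferInstance
  surjective := Ideal.Quotient.mk_surjective.comp fun a => ⟨a, degreeZeroHom_coe h𝒜 a⟩
  map_eq_zero i hi a ha := by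
    have hzero : degreeZeroHom h𝒜 a = 0 := Subtype.ext (decompose_of_mem_ne 𝒜 ha hi)
    rw [RingHom.comp_apply, hzero, map_zero]
  isNilpotent := by
    convert isNilpotent_toIntSubmodule_map_coe (𝒜 := 𝒜)
      (IsSemiprimaryRing.isNilpotent (R := 𝒜 0)) using 2
    ext a
    refine ⟨fun ⟨ha, ha0⟩ => ⟨⟨a, ha0⟩, ?_, rfl⟩, ?_⟩
    · rw [← degreeZeroHom_coe h𝒜 ⟨a, ha0⟩]
      exact Ideal.Quotient.eq_zero_iff_mem.1 ha
    · rintro ⟨a, ha, rfl⟩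
      refine ⟨?_, a.2⟩
      exact Ideal.Quotient.eq_zero_iff_mem.2 ((degreeZeroHom_coe h𝒜 a).symm ▸ ha)

end DegreeZero

attribute [local instance] RingHomInvPair.of_ringEquiv in
lemma globalDim_le_of_ringEquiv {R R' : Type u} [Ring R] [Ring R'] (e : R ≃+* R') :
    globalDim R ≤ globalDim R' := by
  rcases eq_or_ne (globalDim R') ⊤ with htop | htop
  · exact htop ▸ le_top
  obtain ⟨n, hn⟩ := ENat.ne_top_iff_exists.1 htop
  rw [← hn, globalDim_le_iff]
  intro M _ _
  let := Module.compHom M (e.symm : R' →+* R)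
  have hpd := pdLE_iff_hasProjectiveDimensionLE.1 (globalDim_le_iff.1 hn.ge M)
  let eM : ModuleCat.of R' M ≃ₛₗ[RingHomClass.toRingHom e.symm] ModuleCat.of R M :=
    { AddEquiv.refl M with map_smul' := fun _ _ => rfl }
  exact pdLE_iff_hasProjectiveDimensionLE.2
    (ModuleCat.hasProjectiveDimensionLE_of_semiLinearEquiv e.symm eM n)

end Opposite

section GradedSimple

open MulOpposite

variable {A : Type u} [Ring A] (𝒜 : ℤ → AddSubgroup A)

/-- The supremum of the projective dimensions of the graded simple left modules. -/
noncomputable def gradedSimpleProjDim : ℕ∞ :=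
  sSup {c : ℕ∞ | ∃ (M : Type u) (_ : AddCommGroup M) (_ : Module A M)
    (ℳ : ℤ → AddSubgroup M), IsGradedSimple A 𝒜 M ℳ ∧ c = projDim A M}

variable {𝒜} in
lemma IsGradedSimple.projDim_le_gradedSimpleProjDim {M : Type u} [AddCommGroup M] [Module A M]
    {ℳ : ℤ → AddSubgroup M} (hM : IsGradedSimple A 𝒜 M ℳ) :
    projDim A M ≤ gradedSimpleProjDim 𝒜 :=
  le_sSup ⟨M, _, _, ℳ, hM, rfl⟩

lemma gradedSimpleProjDim_le_globalDim : gradedSimpleProjDim 𝒜 ≤ globalDim A :=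
  sSup_le fun _ ⟨M, _, _, _, _, hc⟩ =>
    hc.le.trans (le_iSup (fun N : ModuleCat.{u} A => projDim A N) (ModuleCat.of A M))

lemma gradedSimpleProjDim_opGrading : gradedSimpleProjDim (opGrading 𝒜) =
    sSup {c : ℕ∞ | ∃ (M : Type u) (_ : AddCommGroup M) (_ : Module Aᵐᵒᵖ M)
      (ℳ : ℤ → AddSubgroup M), IsGradedSimpleRight A 𝒜 M ℳ ∧ c = projDim Aᵐᵒᵖ M} := by
  have isGradedModule_iff (M : Type u) [AddCommGroup M] [Module Aᵐᵒᵖ M] (ℳ : ℤ → AddSubgroup M) :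
      IsGradedModule Aᵐᵒᵖ (opGrading 𝒜) M ℳ ↔ IsGradedRightModule A 𝒜 M ℳ :=
    and_congr_right' ⟨fun h i j a x ha hx => add_comm i j ▸ h i j (op a) x ha hx,
      fun h i j a x ha hx => add_comm j i ▸ h i j (unop a) x ha hx⟩
  simp only [gradedSimpleProjDim, IsGradedSimple, IsGradedSimpleRight, isGradedModule_iff]

variable {𝒜} [GradedRing 𝒜] {S : Type u} [Ring S] {f : A →+* S}

theorem globalDim_op_le_gradedSimpleProjDim (h𝒜 : ∀ i < 0, 𝒜 i = ⊥)
    (hf : IsSemisimpleAugmentation 𝒜 f) : globalDim Aᵐᵒᵖ ≤ gradedSimpleProjDim 𝒜 := by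
  rcases eq_or_ne (gradedSimpleProjDim 𝒜) ⊤ with htop | htop
  · exact htop ▸ le_top
  obtain ⟨n, hn⟩ := ENat.ne_top_iff_exists.1 htop
  have hsimple (N : Type u) [AddCommGroup N] [Module A N] (𝒩 : ℤ → AddSubgroup N)
      (h𝒩 : IsGradedSimple A 𝒜 N 𝒩) : pdLE A n N :=
    projDim_le_iff.1 (hn ▸ h𝒩.projDim_le_gradedSimpleProjDim)
  have hdetects : DetectsSMul (RingHom.ker (RingHom.op f)) (CharacterModule (A ⧸ RingHom.ker f)) :=
    CharacterDual.detectsSMul fun a => op_eq_zero_iff (f a)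
  rw [← hn, globalDim_le_iff]
  exact fun M _ _ =>
    pdLE_of_hasInjectiveDimensionLE hf.op (fun i hi => opGrading_eq_bot 𝒜 (h𝒜 i hi)) hdetects
      (CharacterDual.hasInjectiveDimensionLE (pdLE_quotient_ker_of_isGradedSimple hf hsimple)) M

end GradedSimple

theorem stmt_0_general (A : Type u) [Ring A] (𝒜 : ℤ → AddSubgroup A) [GradedRing 𝒜]
    (h𝒜 : ∀ i : ℤ, i < 0 → 𝒜 i = ⊥) [IsSemiprimaryRing (𝒜 0)] :
    globalDim A =
      sSup {c : ℕ∞ | ∃ (M : Type u) (_ : AddCommGroup M) (_ : Module A M)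
        (ℳ : ℤ → AddSubgroup M), IsGradedSimple A 𝒜 M ℳ ∧ c = projDim A M} ∧
    globalDim A = globalDim Aᵐᵒᵖ ∧
    globalDim A =
      sSup {c : ℕ∞ | ∃ (M : Type u) (_ : AddCommGroup M) (_ : Module Aᵐᵒᵖ M)
        (ℳ : ℤ → AddSubgroup M), IsGradedSimpleRight A 𝒜 M ℳ ∧ c = projDim Aᵐᵒᵖ M} := by
  have hf := isSemisimpleAugmentation_mk_jacobson h𝒜
  have op_le_left : globalDim Aᵐᵒᵖ ≤ gradedSimpleProjDim 𝒜 :=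
    globalDim_op_le_gradedSimpleProjDim h𝒜 hf
  have left_le : gradedSimpleProjDim 𝒜 ≤ globalDim A := gradedSimpleProjDim_le_globalDim 𝒜
  have le_right : globalDim A ≤ gradedSimpleProjDim (opGrading 𝒜) :=
    (globalDim_le_of_ringEquiv (RingEquiv.opOp A)).trans
      (globalDim_op_le_gradedSimpleProjDim (fun i hi => opGrading_eq_bot 𝒜 (h𝒜 i hi)) hf.op)
  have right_le : gradedSimpleProjDim (opGrading 𝒜) ≤ globalDim Aᵐᵒᵖ :=
    gradedSimpleProjDim_le_globalDim (opGrading 𝒜)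
  rw [← gradedSimpleProjDim_opGrading]
  exact ⟨le_antisymm (le_right.trans (right_le.trans op_le_left)) left_le,
    le_antisymm (le_right.trans right_le) (op_le_left.trans left_le),
    le_antisymm le_right (right_le.trans (op_le_left.trans left_le))⟩

theorem stmt_0 (A : Type u) [Ring A] (𝒜 : ℤ → AddSubgroup A) [GradedRing 𝒜]
    (hneg : ∀ i : ℤ, i < 0 → 𝒜 i = ⊥)
    (hart_left : IsArtinianRing ↥(𝒜 0)) (hart_right : IsArtinianRing (↥(𝒜 0))ᵐᵒᵖ) :
    globalDim A =
      sSup {c : ℕ∞ | ∃ (M : Type u) (_ : AddCommGroup M) (_ : Module A M)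
        (ℳ : ℤ → AddSubgroup M), IsGradedSimple A 𝒜 M ℳ ∧ c = projDim A M} ∧
    globalDim A = globalDim Aᵐᵒᵖ ∧
    globalDim A =
      sSup {c : ℕ∞ | ∃ (M : Type u) (_ : AddCommGroup M) (_ : Module Aᵐᵒᵖ M)
        (ℳ : ℤ → AddSubgroup M), IsGradedSimpleRight A 𝒜 M ℳ ∧ c = projDim Aᵐᵒᵖ M} :=
  stmt_0_general A 𝒜 hneg
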